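/- arXiv:2412.20708 — 6 statements merged into one kernel-verified Lean document; each statement's English description precedes it below -/
import Mathlib

section
/- Let Ξ be a nonempty compact subset of ℝ^d, let ψ_1, …, ψ_m : Ξ → ℝ be bounded Borel measurable functions, let γ_1, …, γ_m ∈ ℝ, and let 𝒫 be the associated ambiguity set. Let P ∈ 𝒫 and let Q : Ξ → ℝ be Borel measurable and P-integrable. Then for every ε > 0 there exists a finitely supported probability measure ∑_{j=1}^n p_j δ_{ξ_j} on Ξ that is ε-feasible, i.e. ∑_{j=1}^n p_j ψ_i(ξ_j) ≤ γ_i + ε for every i ∈ {1,…,m}, and that is an ε-approximation of P, i.e. |∫_Ξ Q dP − ∑_{j=1}^n p_j Q(ξ_j)| ≤ ε. -/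
open MeasureTheory Filter

/-!
The integral of a Banach-valued function lies in the closed convex hull of the values it takes on
any set of full measure, so it is a limit of convex combinations of such values. Apply this to
`x ↦ (Q x, ψ₁ x, …, ψₘ x)` with the supremum norm: one convex combination approximates all the
integrals at once, and its weights are those of the finitely supported measure.
-/

section

variable {Ω E : Type*}

theorem exists_stdSimplex_of_mem_convexHull_image {R : Type*} [Field R] [LinearOrder R]
    [IsStrictOrderedRing R] [AddCommGroup E] [Module R E] {f : Ω → E} {s : Set Ω} {y : E}
    (hy : y ∈ convexHull R (f '' s)) :
    ∃ (n : ℕ) (ξ : Fin n → Ω) (p : Fin n → R),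
      (∀ j, ξ j ∈ s) ∧ p ∈ stdSimplex R (Fin n) ∧ ∑ j, p j • f (ξ j) = y := by
  obtain ⟨κ, _, w, z, hw_nonneg, hw_sum, hz, rfl⟩ := mem_convexHull_iff_exists_fintype.1 hy
  choose ξ hξ hξz using hz
  let e := (Fintype.equivFin κ).symm
  refine ⟨Fintype.card κ, ξ ∘ e, w ∘ e, fun j ↦ hξ (e j), ⟨fun j ↦ hw_nonneg (e j), ?_⟩, ?_⟩
  · simpa only [Function.comp_apply, e.sum_comp w] using hw_sum
  · simp only [Function.comp_apply, hξz, e.sum_comp fun k ↦ w k • z k]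

variable [MeasurableSpace Ω] {μ : Measure Ω} [IsProbabilityMeasure μ] {s : Set Ω}
  [NormedAddCommGroup E] [NormedSpace ℝ E] [CompleteSpace E]

theorem integral_mem_closure_convexHull_image {f : Ω → E}
    (hs : ∀ᵐ x ∂μ, x ∈ s) (hf : Integrable f μ) :
    ∫ x, f x ∂μ ∈ closure (convexHull ℝ (f '' s)) :=
  (convex_convexHull ℝ _).closure.integral_mem isClosed_closure
    (hs.mono fun _ hx ↦ subset_closure (subset_convexHull ℝ _ (Set.mem_image_of_mem f hx))) hf

theorem exists_stdSimplex_dist_integral_lt {f : Ω → E}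
    (hs : ∀ᵐ x ∂μ, x ∈ s) (hf : Integrable f μ) {ε : ℝ} (hε : 0 < ε) :
    ∃ (n : ℕ) (ξ : Fin n → Ω) (p : Fin n → ℝ),
      (∀ j, ξ j ∈ s) ∧ p ∈ stdSimplex ℝ (Fin n) ∧
        dist (∫ x, f x ∂μ) (∑ j, p j • f (ξ j)) < ε := by
  obtain ⟨y, hy, hdist⟩ :=
    Metric.mem_closure_iff.1 (integral_mem_closure_convexHull_image hs hf) ε hε
  obtain ⟨n, ξ, p, hξ, hp, rfl⟩ := exists_stdSimplex_of_mem_convexHull_image hy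
  exact ⟨n, ξ, p, hξ, hp, hdist⟩

theorem exists_stdSimplex_forall_dist_integral_lt {ι : Type*} [Finite ι] {F : ι → Type*}
    [∀ i, NormedAddCommGroup (F i)] [∀ i, NormedSpace ℝ (F i)] [∀ i, CompleteSpace (F i)]
    {f : (i : ι) → Ω → F i} (hs : ∀ᵐ x ∂μ, x ∈ s) (hf : ∀ i, Integrable (f i) μ)
    {ε : ℝ} (hε : 0 < ε) :
    ∃ (n : ℕ) (ξ : Fin n → Ω) (p : Fin n → ℝ),
      (∀ j, ξ j ∈ s) ∧ p ∈ stdSimplex ℝ (Fin n) ∧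
        ∀ i, dist (∫ x, f i x ∂μ) (∑ j, p j • f i (ξ j)) < ε := by
  have := Fintype.ofFinite ι
  obtain ⟨n, ξ, p, hξ, hp, hdist⟩ :=
    exists_stdSimplex_dist_integral_lt hs (Integrable.of_eval hf) hε
  refine ⟨n, ξ, p, hξ, hp, fun i ↦ ?_⟩
  simpa only [eval_integral hf, Finset.sum_apply, Pi.smul_apply] using
    (dist_pi_lt_iff hε).1 hdist i

theorem eps_feasible_eps_approximation_general {ι : Type*} [Finite ι] {ψ : ι → Ω → ℝ} {γ : ι → ℝ}
    {Q : Ω → ℝ} (hs : ∀ᵐ x ∂μ, x ∈ s) (hψ : ∀ i, Integrable (ψ i) μ)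
    (hγ : ∀ i, ∫ x, ψ i x ∂μ ≤ γ i) (hQ : Integrable Q μ) {ε : ℝ} (hε : 0 < ε) :
    ∃ (n : ℕ) (ξ : Fin n → Ω) (p : Fin n → ℝ),
      (∀ j, ξ j ∈ s) ∧ (∀ j, 0 ≤ p j) ∧ (∑ j, p j = 1) ∧
      (∀ i, ∑ j, p j * ψ i (ξ j) ≤ γ i + ε) ∧
      |(∫ x, Q x ∂μ) - ∑ j, p j * Q (ξ j)| ≤ ε := by
  obtain ⟨n, ξ, p, hξ, ⟨hp_nonneg, hp_sum⟩, hdist⟩ :=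
    exists_stdSimplex_forall_dist_integral_lt (f := fun i : Option ι ↦ i.elim Q ψ) hs
      (Option.forall.2 ⟨hQ, hψ⟩) hε
  simp only [Option.forall, Option.elim_none, Option.elim_some, Real.dist_eq, smul_eq_mul] at hdist
  obtain ⟨hdistQ, hdistψ⟩ := hdist
  refine ⟨n, ξ, p, hξ, hp_nonneg, hp_sum, fun i ↦ ?_, hdistQ.le⟩
  linarith [(abs_lt.1 (hdistψ i)).1, hγ i]

end

/-- For any `P` in the moment-based ambiguity set and any `ε > 0`,
there is an `ε`-feasible finitely supported probability distribution on `Ξ` that is an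
`ε`-approximation of `P`. -/
theorem eps_feasible_eps_approximation
    (d m : ℕ) (Ξ : Set (EuclideanSpace ℝ (Fin d)))
    (hΞne : Ξ.Nonempty) (hΞc : IsCompact Ξ)
    (ψ : Fin m → EuclideanSpace ℝ (Fin d) → ℝ)
    (hψm : ∀ i, Measurable (ψ i)) (hψb : ∀ i, ∃ C, ∀ x ∈ Ξ, |ψ i x| ≤ C)
    (γ : Fin m → ℝ)
    (P : Measure (EuclideanSpace ℝ (Fin d))) [IsProbabilityMeasure P]
    (hPΞ : P Ξᶜ = 0)
    (hPamb : ∀ i, ∫ x, ψ i x ∂P ≤ γ i)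
    (Q : EuclideanSpace ℝ (Fin d) → ℝ) (hQm : Measurable Q)
    (hQint : Integrable Q P)
    (ε : ℝ) (hε : 0 < ε) :
    ∃ (n : ℕ) (ξ : Fin n → EuclideanSpace ℝ (Fin d)) (p : Fin n → ℝ),
      (∀ j, ξ j ∈ Ξ) ∧ (∀ j, 0 ≤ p j) ∧ (∑ j, p j = 1) ∧
      (∀ i, ∑ j, p j * ψ i (ξ j) ≤ γ i + ε) ∧
      |(∫ x, Q x ∂P) - ∑ j, p j * Q (ξ j)| ≤ ε := by
  have hae : ∀ᵐ x ∂P, x ∈ Ξ := mem_ae_iff.2 hPΞ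
  have hψ (i : Fin m) : Integrable (ψ i) P :=
    (hψb i).elim fun C hC ↦ .of_bound (hψm i).aestronglyMeasurable C (hae.mono hC)
  exact eps_feasible_eps_approximation_general hae hψ hPamb hQint hε
end

section
/- Let Ξ be a nonempty compact subset of ℝ^d, let Q : Ξ → ℝ be bounded and upper semicontinuous, let ψ_1, …, ψ_m : Ξ → ℝ be bounded and lower semicontinuous, let γ_1, …, γ_m ∈ ℝ, and suppose the ambiguity set 𝒫 is nonempty. Then the worst-case expected value is attained: there exists P* ∈ 𝒫 with ∫_Ξ Q dP* = sup_{P ∈ 𝒫} ∫_Ξ Q dP. -/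
open MeasureTheory Filter

/-!
The space of probability measures on the compact metrizable space `Ξ` is weakly compact. By the
portmanteau theorem the mass of an open set is weakly lower semicontinuous, and the layer cake
formula together with Fatou's lemma extends this to `μ ↦ ∫ f ∂μ` for every bounded lower
semicontinuous `f`. Hence the constraints `∫ ψ i ∂μ ≤ γ i` cut out a weakly compact set, on which
the weakly upper semicontinuous function `μ ↦ ∫ Q ∂μ` attains its maximum.
-/

theorem integral_eq_truncateToReal_lintegral_sub {X : Type*} [MeasurableSpace X] {f : X → ℝ}
    {C : ℝ} (hf : Measurable f) (hC : ∀ x, |f x| ≤ C) (μ : Measure X) [IsProbabilityMeasure μ] :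
    ∫ x, f x ∂μ =
      ENNReal.truncateToReal (.ofReal (C + C)) (∫⁻ x, .ofReal (f x + C) ∂μ) - C := by
  have hint : Integrable f μ := .of_bound hf.aestronglyMeasurable C (.of_forall hC)
  have hnonneg (x : X) : 0 ≤ f x + C := neg_le_iff_add_nonneg.1 (neg_le_of_abs_le (hC x))
  have hle : ∫⁻ x, .ofReal (f x + C) ∂μ ≤ ENNReal.ofReal (C + C) :=
    calc ∫⁻ x, .ofReal (f x + C) ∂μ
      _ ≤ ∫⁻ _, .ofReal (C + C) ∂μ := by gcongr with x; exact le_of_abs_le (hC x)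
      _ = .ofReal (C + C) := by simp
  calc ∫ x, f x ∂μ
    _ = ∫ x, f x + C ∂μ - C := by simp [integral_add hint (integrable_const C)]
    _ = (∫⁻ x, .ofReal (f x + C) ∂μ).toReal - C := by
      rw [integral_eq_lintegral_of_nonneg_ae (.of_forall hnonneg)
        (hf.add_const C).aestronglyMeasurable]
    _ = _ := by rw [ENNReal.truncateToReal_eq_toReal ENNReal.ofReal_ne_top hle]

section Semicontinuity

variable {X : Type*} [TopologicalSpace X] [MeasurableSpace X] [OpensMeasurableSpace X]

theorem lowerSemicontinuous_measure_of_isOpen [HasOuterApproxClosed X] {G : Set X}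
    (hG : IsOpen G) : LowerSemicontinuous fun μ : ProbabilityMeasure X ↦ (μ : Measure X) G :=
  lowerSemicontinuous_iff_le_liminf.2 fun _ ↦
    ProbabilityMeasure.le_liminf_measure_open_of_tendsto tendsto_id hG

variable [TopologicalSpace.PseudoMetrizableSpace X] [TopologicalSpace.SeparableSpace X]
  {f : X → ℝ} {C : ℝ}

theorem lowerSemicontinuous_lintegral_ofReal (hf : LowerSemicontinuous f) (hf0 : ∀ x, 0 ≤ f x) :
    LowerSemicontinuous fun μ : ProbabilityMeasure X ↦ ∫⁻ x, .ofReal (f x) ∂(μ : Measure X) := by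
  refine lowerSemicontinuous_iff_le_liminf.2 fun μ ↦ ?_
  simp_rw [lintegral_eq_lintegral_meas_lt _ (.of_forall hf0) hf.measurable.aemeasurable]
  have hmeas (ν : ProbabilityMeasure X) : Measurable fun t ↦ (ν : Measure X) {x | t < f x} :=
    Antitone.measurable fun _ _ hst ↦ measure_mono fun _ hx ↦ hst.trans_lt hx
  have hlsc (t : ℝ) : LowerSemicontinuous fun ν : ProbabilityMeasure X ↦
      (ν : Measure X) {x | t < f x} :=
    lowerSemicontinuous_measure_of_isOpen (hf.isOpen_preimage t)
  calc ∫⁻ t in Set.Ioi 0, (μ : Measure X) {x | t < f x}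
    _ ≤ ∫⁻ t in Set.Ioi 0,
          liminf (fun ν : ProbabilityMeasure X ↦ (ν : Measure X) {x | t < f x}) (nhds μ) :=
      lintegral_mono fun t ↦ lowerSemicontinuous_iff_le_liminf.1 (hlsc t) μ
    _ ≤ liminf (fun ν : ProbabilityMeasure X ↦
          ∫⁻ t in Set.Ioi 0, (ν : Measure X) {x | t < f x}) (nhds μ) :=
      lintegral_liminf_le hmeas

theorem lowerSemicontinuous_integral (hf : LowerSemicontinuous f) (hC : ∀ x, |f x| ≤ C) :
    LowerSemicontinuous fun μ : ProbabilityMeasure X ↦ ∫ x, f x ∂(μ : Measure X) := by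
  have hlintegral := lowerSemicontinuous_lintegral_ofReal
    (hf.add lowerSemicontinuous_const) fun x ↦ neg_le_iff_add_nonneg.1 (neg_le_of_abs_le (hC x))
  simp_rw [integral_eq_truncateToReal_lintegral_sub hf.measurable hC, sub_eq_add_neg]
  -- Truncation makes `toReal` monotone and continuous on all of `ℝ≥0∞`, including `⊤`.
  exact ((ENNReal.continuous_truncateToReal ENNReal.ofReal_ne_top).comp_lowerSemicontinuous
    hlintegral (ENNReal.monotone_truncateToReal ENNReal.ofReal_ne_top)).add
      lowerSemicontinuous_const

theorem upperSemicontinuous_integral (hf : UpperSemicontinuous f) (hC : ∀ x, |f x| ≤ C) :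
    UpperSemicontinuous fun μ : ProbabilityMeasure X ↦ ∫ x, f x ∂(μ : Measure X) := by
  have hneg : LowerSemicontinuous fun μ : ProbabilityMeasure X ↦ ∫ x, (-f) x ∂(μ : Measure X) :=
    lowerSemicontinuous_integral hf.neg fun x ↦ (abs_neg (f x)).trans_le (hC x)
  simpa [Pi.neg_def, integral_neg] using! hneg.neg

theorem isClosed_setOf_forall_integral_le {ι : Type*} {ψ : ι → X → ℝ}
    (hψ : ∀ i, LowerSemicontinuous (ψ i)) (hψb : ∀ i, ∃ C, ∀ x, |ψ i x| ≤ C) (γ : ι → ℝ) :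
    IsClosed {μ : ProbabilityMeasure X | ∀ i, ∫ x, ψ i x ∂(μ : Measure X) ≤ γ i} := by
  rw [Set.ofPred_forall]
  refine isClosed_iInter fun i ↦ ?_
  obtain ⟨C, hC⟩ := hψb i
  exact (lowerSemicontinuous_integral (hψ i) hC).isClosed_preimage (γ i)

end Semicontinuity

section AmbiguitySet

variable {X ι : Type*} [MeasurableSpace X] {Ξ : Set X} {ψ : ι → X → ℝ} {γ : ι → ℝ}

/-- The ambiguity set `𝒫` of the moment constraints `∫ ψ i ∂P ≤ γ i`. A probability measure on `Ξ`
is encoded as a probability measure on the ambient space for which `Ξᶜ` is a null set. -/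
def ambiguitySet (Ξ : Set X) (ψ : ι → X → ℝ) (γ : ι → ℝ) : Set (Measure X) :=
  {P | IsProbabilityMeasure P ∧ P Ξᶜ = 0 ∧ ∀ i, ∫ x, ψ i x ∂P ≤ γ i}

theorem exists_probabilityMeasure_map_subtype_val_eq (hΞ : MeasurableSet Ξ) (P : Measure X)
    [IsProbabilityMeasure P] (hP : P Ξᶜ = 0) :
    ∃ μ : ProbabilityMeasure Ξ, (μ : Measure Ξ).map Subtype.val = P := by
  have hmem : ∀ᵐ x ∂P, x ∈ Ξ := mem_ae_iff.2 hP
  have hprob : IsProbabilityMeasure (P.comap (Subtype.val : Ξ → X)) :=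
    (MeasurableEmbedding.subtype_coe hΞ).isProbabilityMeasure_comap (by simpa using hmem)
  exact ⟨⟨_, hprob⟩,
    (map_comap_subtype_coe hΞ P).trans (Measure.restrict_eq_self_of_ae_mem hmem)⟩

theorem map_subtype_val_mem_ambiguitySet_iff (hΞ : MeasurableSet Ξ) (μ : ProbabilityMeasure Ξ) :
    (μ : Measure Ξ).map Subtype.val ∈ ambiguitySet Ξ ψ γ ↔
      ∀ i, ∫ x : Ξ, ψ i x ∂(μ : Measure Ξ) ≤ γ i := by
  have hemb := MeasurableEmbedding.subtype_coe hΞ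
  have hprob : IsProbabilityMeasure ((μ : Measure Ξ).map Subtype.val) :=
    Measure.isProbabilityMeasure_map measurable_subtype_coe.aemeasurable
  have hnull : (μ : Measure Ξ).map Subtype.val Ξᶜ = 0 := by simp [hemb.map_apply]
  simp [ambiguitySet, hprob, hnull, hemb.integral_map]

theorem ambiguitySet_eq_image_map_subtype_val (hΞ : MeasurableSet Ξ) :
    ambiguitySet Ξ ψ γ = (fun μ : ProbabilityMeasure Ξ ↦ (μ : Measure Ξ).map Subtype.val) ''
      {μ | ∀ i, ∫ x : Ξ, ψ i x ∂(μ : Measure Ξ) ≤ γ i} := by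
  ext P
  constructor
  · intro hP
    have := hP.1
    obtain ⟨μ, rfl⟩ := exists_probabilityMeasure_map_subtype_val_eq hΞ P hP.2.1
    exact ⟨μ, (map_subtype_val_mem_ambiguitySet_iff hΞ μ).1 hP, rfl⟩
  · rintro ⟨μ, hμ, rfl⟩
    exact (map_subtype_val_mem_ambiguitySet_iff hΞ μ).2 hμ

end AmbiguitySet

theorem WCEV_attained_general {X ι : Type*} [TopologicalSpace X]
    [TopologicalSpace.MetrizableSpace X] [MeasurableSpace X] [BorelSpace X] {Ξ : Set X}
    (hΞ : IsCompact Ξ) {Q : X → ℝ} (hQ : UpperSemicontinuousOn Q Ξ)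
    (hQb : ∃ C, ∀ x ∈ Ξ, |Q x| ≤ C) {ψ : ι → X → ℝ}
    (hψ : ∀ i, LowerSemicontinuousOn (ψ i) Ξ) (hψb : ∀ i, ∃ C, ∀ x ∈ Ξ, |ψ i x| ≤ C)
    {γ : ι → ℝ} (hne : (ambiguitySet Ξ ψ γ).Nonempty) :
    ∃ P ∈ ambiguitySet Ξ ψ γ, IsMaxOn (fun P ↦ ∫ x, Q x ∂P) (ambiguitySet Ξ ψ γ) P := by
  have : CompactSpace Ξ := isCompact_iff_compactSpace.1 hΞ
  let := TopologicalSpace.metrizableSpaceMetric X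
  have hmeas : MeasurableSet Ξ := hΞ.measurableSet
  obtain ⟨C, hC⟩ := hQb
  have hclosed : IsClosed
      {μ : ProbabilityMeasure Ξ | ∀ i, ∫ x : Ξ, ψ i x ∂(μ : Measure Ξ) ≤ γ i} :=
    isClosed_setOf_forall_integral_le (fun i ↦ lowerSemicontinuous_restrict_iff.2 (hψ i))
      (fun i ↦ (hψb i).imp fun _ h x ↦ h x x.2) γ
  have husc : UpperSemicontinuous fun μ : ProbabilityMeasure Ξ ↦ ∫ x : Ξ, Q x ∂(μ : Measure Ξ) :=
    upperSemicontinuous_integral (upperSemicontinuousOn_iff_restrict.2 hQ) fun x ↦ hC x x.2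
  rw [ambiguitySet_eq_image_map_subtype_val hmeas] at hne ⊢
  obtain ⟨μ, hμ, hmax⟩ := (husc.upperSemicontinuousOn _).exists_isMaxOn hne.of_image
    hclosed.isCompact
  refine ⟨_, Set.mem_image_of_mem _ hμ, ?_⟩
  rintro _ ⟨ν, hν, rfl⟩
  simpa [(MeasurableEmbedding.subtype_coe hmeas).integral_map] using hmax hν

/-- If `Q` is bounded and upper semicontinuous on the nonempty compact
set `Ξ`, the `ψ_i` are bounded and lower semicontinuous on `Ξ`, and the ambiguity set is
nonempty, then the worst-case expected value is attained. -/
theorem WCEV_attained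
    (d m : ℕ) (Ξ : Set (EuclideanSpace ℝ (Fin d)))
    (hΞne : Ξ.Nonempty) (hΞc : IsCompact Ξ)
    (Q : EuclideanSpace ℝ (Fin d) → ℝ)
    (hQu : UpperSemicontinuousOn Q Ξ) (hQb : ∃ C, ∀ x ∈ Ξ, |Q x| ≤ C)
    (ψ : Fin m → EuclideanSpace ℝ (Fin d) → ℝ)
    (hψl : ∀ i, LowerSemicontinuousOn (ψ i) Ξ)
    (hψb : ∀ i, ∃ C, ∀ x ∈ Ξ, |ψ i x| ≤ C)
    (γ : Fin m → ℝ)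
    (hamb : ∃ P : Measure (EuclideanSpace ℝ (Fin d)),
      IsProbabilityMeasure P ∧ P Ξᶜ = 0 ∧ ∀ i, ∫ x, ψ i x ∂P ≤ γ i) :
    ∃ P : Measure (EuclideanSpace ℝ (Fin d)),
      (IsProbabilityMeasure P ∧ P Ξᶜ = 0 ∧ ∀ i, ∫ x, ψ i x ∂P ≤ γ i) ∧
      (∫ x, Q x ∂P) =
        sSup {r : ℝ | ∃ P' : Measure (EuclideanSpace ℝ (Fin d)),
          (IsProbabilityMeasure P' ∧ P' Ξᶜ = 0 ∧ ∀ i, ∫ x, ψ i x ∂P' ≤ γ i) ∧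
          (∫ x, Q x ∂P') = r} := by
  obtain ⟨P, hP, hmax⟩ := WCEV_attained_general hΞc hQu hQb hψl hψb hamb
  exact ⟨P, hP, (sSup_image'.trans (hmax.iSup_eq hP)).symm⟩
end

section
/- Let Ξ be a nonempty compact metric space, let ψ_1, …, ψ_m : Ξ → ℝ be bounded and lower semicontinuous, and let γ_1, …, γ_m ∈ ℝ. Then the ambiguity set 𝒫 = {P a Borel probability measure on Ξ : ∫_Ξ ψ_i dP ≤ γ_i for all i ∈ {1,…,m}} is a compact subset of the space of Borel probability measures on Ξ equipped with the topology of weak convergence (convergence in distribution). -/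
open MeasureTheory Filter

/-! A lower semicontinuous function `f : Ω → [0, ∞]` is the supremum of an increasing sequence of
bounded continuous functions, built from inner approximations of the open sets `{x | q < f x}`,
`q` rational. By monotone convergence `μ ↦ ∫ f dμ` is then a supremum of weakly continuous
functions, hence weakly lower semicontinuous, and so each moment constraint cuts out a closed set
in the compact space of probability measures. -/

open Set Topology
open scoped BoundedContinuousFunction ENNReal NNReal

section LowerSemicontinuous

variable {Ω : Type*} [TopologicalSpace Ω] [HasOuterApproxClosed Ω]

theorem exists_seq_iSup_eq_indicator_of_isOpen {G : Set Ω} (hG : IsOpen G) (c : ℝ≥0) :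
    ∃ g : ℕ → Ω →ᵇ ℝ, ∀ x, ⨆ n, ENNReal.ofReal (g n x) = G.indicator (fun _ ↦ (c : ℝ≥0∞)) x := by
  let a := hG.isClosed_compl.apprSeq
  have ha_le (n x) : (a n x : ℝ) ≤ 1 := mod_cast
    HasOuterApproxClosed.apprSeq_apply_le_one hG.isClosed_compl n x
  have hbound (n x) : ‖(c : ℝ) * (1 - a n x)‖ ≤ c := by
    rw [Real.norm_of_nonneg (mul_nonneg c.coe_nonneg (sub_nonneg.2 (ha_le n x)))]
    exact mul_le_of_le_one_right c.coe_nonneg (sub_le_self 1 (a n x).coe_nonneg)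
  refine ⟨fun n ↦ .ofNormedAddCommGroup (fun x ↦ c * (1 - a n x)) (by fun_prop) c (hbound n),
    fun x ↦ ?_⟩
  simp only [BoundedContinuousFunction.coe_ofNormedAddCommGroup]
  by_cases hx : x ∈ G
  · have ha_lim : Tendsto (fun n ↦ a n x) atTop (𝓝 0) := by
      simpa [hx] using
        tendsto_pi_nhds.1 (HasOuterApproxClosed.tendsto_apprSeq hG.isClosed_compl) x
    have hlim : Tendsto (fun n ↦ ENNReal.ofReal (c * (1 - a n x))) atTop (𝓝 c) := by
      simpa using ENNReal.tendsto_ofReal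
        (((NNReal.tendsto_coe.2 ha_lim).const_sub 1).const_mul (c : ℝ))
    rw [indicator_of_mem hx]
    refine le_antisymm (iSup_le fun n ↦ ?_) (le_of_tendsto' hlim (le_iSup _))
    exact ENNReal.ofReal_le_of_le_toReal ((le_abs_self _).trans (hbound n x))
  · have ha_one (n) : a n x = 1 := HasOuterApproxClosed.apprSeq_apply_eq_one _ n hx
    simp [hx, ha_one]

theorem iSup_indicator_rat_lt_eq {α : Type*} (f : α → ℝ≥0∞) (x : α) :
    ⨆ q : ℚ, {y | (Real.toNNReal q : ℝ≥0∞) < f y}.indicator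
      (fun _ ↦ (Real.toNNReal q : ℝ≥0∞)) x = f x := by
  refine le_antisymm (iSup_le fun q ↦ indicator_apply_le' (fun hx ↦ le_of_lt hx) fun _ ↦ zero_le) ?_
  refine le_of_forall_lt fun c hc ↦ ?_
  obtain ⟨q, -, hcq, hqx⟩ := ENNReal.lt_iff_exists_rat_btwn.1 hc
  have hmem : x ∈ {y | (Real.toNNReal q : ℝ≥0∞) < f y} := hqx
  exact hcq.trans_le (le_iSup_of_le q (by rw [indicator_of_mem hmem]))

theorem exists_monotone_seq_iSup_eq_of_lowerSemicontinuous {f : Ω → ℝ≥0∞}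
    (hf : LowerSemicontinuous f) :
    ∃ g : ℕ → Ω →ᵇ ℝ, Monotone g ∧ ∀ x, ⨆ n, ENNReal.ofReal (g n x) = f x := by
  choose g hg using fun q : ℚ ↦ exists_seq_iSup_eq_indicator_of_isOpen
    (hf.isOpen_preimage (Real.toNNReal q)) (Real.toNNReal q)
  obtain ⟨e, he⟩ := exists_surjective_nat (ℚ × ℕ)
  let h (k : ℕ) : Ω →ᵇ ℝ := g (e k).1 (e k).2
  have hpartial (n x) :
      ENNReal.ofReal (partialSups h n x) = partialSups (fun k ↦ ENNReal.ofReal (h k x)) n := by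
    simp only [partialSups_apply]
    exact Finset.apply_sup'_eq_sup'_comp _ (fun k : Ω →ᵇ ℝ ↦ ENNReal.ofReal (k x))
      fun k l ↦ ENNReal.ofReal_max (k x) (l x)
  refine ⟨partialSups h, (partialSups h).monotone, fun x ↦ ?_⟩
  calc ⨆ n, ENNReal.ofReal (partialSups h n x)
      = ⨆ k, ENNReal.ofReal (h k x) := by simp_rw [hpartial, iSup_partialSups_eq]
    _ = ⨆ p : ℚ × ℕ, ENNReal.ofReal (g p.1 p.2 x) :=
        he.iSup_comp (fun p : ℚ × ℕ ↦ ENNReal.ofReal (g p.1 p.2 x))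
    _ = ⨆ q : ℚ, ⨆ n, ENNReal.ofReal (g q n x) := iSup_prod
    _ = f x := by simp_rw [hg]; exact iSup_indicator_rat_lt_eq f x

theorem lowerSemicontinuous_lintegral [MeasurableSpace Ω] [OpensMeasurableSpace Ω]
    {f : Ω → ℝ≥0∞} (hf : LowerSemicontinuous f) :
    LowerSemicontinuous fun μ : FiniteMeasure Ω ↦ ∫⁻ x, f x ∂(μ : Measure Ω) := by
  obtain ⟨g, hg_mono, hgf⟩ := exists_monotone_seq_iSup_eq_of_lowerSemicontinuous hf
  have hsup (μ : FiniteMeasure Ω) : ∫⁻ x, f x ∂(μ : Measure Ω) =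
      ⨆ n, ∫⁻ x, ENNReal.ofReal (g n x) ∂(μ : Measure Ω) := by
    simp_rw [← hgf]
    exact lintegral_iSup (fun n ↦ (g n).continuous.measurable.ennreal_ofReal)
      fun m n hmn x ↦ ENNReal.ofReal_le_ofReal (hg_mono hmn x)
  simp_rw [hsup]
  exact lowerSemicontinuous_iSup fun n ↦
    (FiniteMeasure.continuous_lintegral_boundedContinuousFunction
      (g n).nnrealPart).lowerSemicontinuous

end LowerSemicontinuous

section Integral

variable {α : Type*} [MeasurableSpace α] {μ : Measure α} {f : α → ℝ} {b c : ℝ}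

theorem integrable_and_integral_le_iff_lintegral_le (hf : AEStronglyMeasurable f μ)
    (hf_nonneg : 0 ≤ᵐ[μ] f) (hc : 0 ≤ c) :
    Integrable f μ ∧ ∫ x, f x ∂μ ≤ c ↔ ∫⁻ x, ENNReal.ofReal (f x) ∂μ ≤ ENNReal.ofReal c := by
  have hle (hfi : Integrable f μ) :
      ∫ x, f x ∂μ ≤ c ↔ ∫⁻ x, ENNReal.ofReal (f x) ∂μ ≤ ENNReal.ofReal c := by
    rw [← ofReal_integral_eq_lintegral_ofReal hfi hf_nonneg, ENNReal.ofReal_le_ofReal_iff hc]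
  refine ⟨fun h ↦ (hle h.1).1 h.2, fun h ↦ ?_⟩
  have hfi : Integrable f μ := (lintegral_ofReal_ne_top_iff_integrable hf hf_nonneg).1
    (ne_top_of_le_ne_top ENNReal.ofReal_ne_top h)
  exact ⟨hfi, (hle hfi).2 h⟩

theorem integrable_and_integral_le_iff_lintegral_sub_le [IsProbabilityMeasure μ]
    (hf : AEStronglyMeasurable f μ) (hbf : ∀ᵐ x ∂μ, b ≤ f x) (hbc : b ≤ c) :
    Integrable f μ ∧ ∫ x, f x ∂μ ≤ c ↔
      ∫⁻ x, ENNReal.ofReal (f x - b) ∂μ ≤ ENNReal.ofReal (c - b) := by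
  rw [← integrable_and_integral_le_iff_lintegral_le (f := fun x ↦ f x - b)
    (hf.sub aestronglyMeasurable_const) (hbf.mono fun x hx ↦ sub_nonneg.2 hx) (sub_nonneg.2 hbc)]
  have hfi : Integrable (fun x ↦ f x - b) μ ↔ Integrable f μ := by
    simp only [sub_eq_add_neg, integrable_add_const_iff]
  rw [hfi]
  refine and_congr_right fun h ↦ ?_
  rw [integral_sub h (integrable_const b), integral_const, probReal_univ, one_smul,
    sub_le_sub_iff_right]

end Integral

section ProbabilityMeasure

variable {Ω : Type*} [TopologicalSpace Ω] [HasOuterApproxClosed Ω] [MeasurableSpace Ω]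

theorem isClosed_setOf_integrable_and_integral_le [OpensMeasurableSpace Ω] {f : Ω → ℝ}
    (hf : LowerSemicontinuous f) (hf_bdd : BddBelow (range f)) (c : ℝ) :
    IsClosed {μ : ProbabilityMeasure Ω |
      Integrable f (μ : Measure Ω) ∧ ∫ x, f x ∂(μ : Measure Ω) ≤ c} := by
  obtain ⟨b₀, hb₀⟩ := hf_bdd
  -- `b ≤ c` is needed because `ENNReal.ofReal (c - b)` truncates negative values to `0`.
  let b := min b₀ c
  have hbf (x) : b ≤ f x := (min_le_left b₀ c).trans (hb₀ (mem_range_self x))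
  have hlsc : LowerSemicontinuous fun x ↦ ENNReal.ofReal (f x - b) :=
    Continuous.comp_lowerSemicontinuous (g := fun t ↦ ENNReal.ofReal (t - b))
      (ENNReal.continuous_ofReal.comp (continuous_sub_right b)) hf
      fun s t hst ↦ ENNReal.ofReal_le_ofReal (sub_le_sub_right hst b)
  convert ((lowerSemicontinuous_lintegral hlsc).comp
    ProbabilityMeasure.toFiniteMeasure_continuous).isClosed_preimage (ENNReal.ofReal (c - b))
    using 1
  ext μ
  exact integrable_and_integral_le_iff_lintegral_sub_le hf.measurable.aestronglyMeasurable
    (ae_of_all _ hbf) (min_le_right b₀ c)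

/-- Integrability is part of the constraint because the Bochner integral of a non-integrable `ψ i`
is `0` by convention. -/
theorem ambiguity_set_weakly_compact_general [T2Space Ω] [CompactSpace Ω] [BorelSpace Ω]
    {ι : Sort*} (ψ : ι → Ω → ℝ) (hψ : ∀ i, LowerSemicontinuous (ψ i)) (γ : ι → ℝ) :
    IsCompact {μ : ProbabilityMeasure Ω | ∀ i,
      Integrable (ψ i) (μ : Measure Ω) ∧ ∫ x, ψ i x ∂(μ : Measure Ω) ≤ γ i} := by
  have hψ_bdd (i) : BddBelow (range (ψ i)) := by
    simpa only [image_univ] using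
      ((hψ i).lowerSemicontinuousOn univ).bddBelow_of_isCompact isCompact_univ
  rw [ofPred_forall]
  exact (isClosed_iInter fun i ↦
    isClosed_setOf_integrable_and_integral_le (hψ i) (hψ_bdd i) (γ i)).isCompact

end ProbabilityMeasure

/-- On a nonempty compact metric space `Ξ`, the ambiguity set defined
by bounded lower semicontinuous moment functions `ψ_i` and bounds `γ_i` is a compact
subset of the space of Borel probability measures on `Ξ` with the topology of weak
convergence. -/
theorem ambiguity_set_weakly_compact
    (Ξ : Type*) [MetricSpace Ξ] [CompactSpace Ξ] [Nonempty Ξ]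
    [MeasurableSpace Ξ] [BorelSpace Ξ]
    (m : ℕ) (ψ : Fin m → Ξ → ℝ)
    (hψl : ∀ i, LowerSemicontinuous (ψ i))
    (hψb : ∀ i, ∃ C, ∀ x, |ψ i x| ≤ C)
    (γ : Fin m → ℝ) :
    IsCompact {μ : ProbabilityMeasure Ξ | ∀ i, ∫ x, ψ i x ∂(μ : Measure Ξ) ≤ γ i} := by
  have hψi (i) (μ : ProbabilityMeasure Ξ) : Integrable (ψ i) (μ : Measure Ξ) :=
    (hψb i).elim fun C hC ↦ .of_bound (hψl i).measurable.aestronglyMeasurable C (ae_of_all _ hC)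
  simpa only [hψi, true_and] using ambiguity_set_weakly_compact_general ψ hψl γ
end

section
/- Let Ξ be a nonempty compact subset of ℝ^d, let Q : Ξ → ℝ and ψ_1, …, ψ_m : Ξ → ℝ be bounded Borel measurable, let γ_1, …, γ_m ∈ ℝ, and let 𝒫 be the associated ambiguity set. Let ξ_1, …, ξ_n ∈ Ξ and p*_1, …, p*_n ≥ 0 with ∑_j p*_j = 1 and ∑_j p*_j ψ_i(ξ_j) ≤ γ_i for every i, and set η* = ∑_j p*_j Q(ξ_j). Suppose α* ∈ ℝ and β*_1, …, β*_m ≥ 0 satisfy α* + ∑_{i=1}^m γ_i β*_i = η*, and set v* = sup_{ξ ∈ Ξ} ( Q(ξ) − α* − ∑_{i=1}^m ψ_i(ξ) β*_i ). Then η* ≤ sup_{P ∈ 𝒫} ∫_Ξ Q dP ≤ η* + v*. -/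
open MeasureTheory Filter

/-!
A discrete distribution that is feasible for the master problem lies in the ambiguity set, so its
expected value `η*` is a lower bound. Conversely, integrating `Q ≤ v* + α* + ∑ i, ψ i * β* i`
against any `P` in the ambiguity set and using `∫ ψ i ∂P ≤ γ i` with `β* ≥ 0` gives
`∫ Q ∂P ≤ v* + α* + ∑ i, γ i * β* i`.
-/

section Definitions

variable {Ω ι κ : Type*}

/-- The ambiguity set `𝒫` of probability measures on `Ξ` whose generalized moments `∫ ψ i` are at
most `γ i`, encoded as measures on the ambient space `Ω` that are concentrated on `Ξ`.
A non-integrable `ψ i` has moment `0`. -/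
def momentAmbiguitySet [MeasurableSpace Ω] (Ξ : Set Ω) (ψ : ι → Ω → ℝ) (γ : ι → ℝ) :
    Set (Measure Ω) :=
  {P | IsProbabilityMeasure P ∧ P Ξᶜ = 0 ∧ ∀ i, ∫ x, ψ i x ∂P ≤ γ i}

/-- The worst-case expected value of `Q` over a set `𝒜` of measures. As a real supremum it is `0`
when `𝒜` is empty or the expected values are unbounded above. -/
noncomputable def worstCaseExpectation [MeasurableSpace Ω] (𝒜 : Set (Measure Ω)) (Q : Ω → ℝ) : ℝ :=
  sSup ((fun P => ∫ x, Q x ∂P) '' 𝒜)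

/-- The reduced cost of the scenario `x` at the shadow prices `(α, β)`, the objective of the
pricing subproblem. -/
def reducedCost [Fintype ι] (Q : Ω → ℝ) (ψ : ι → Ω → ℝ) (α : ℝ) (β : ι → ℝ) (x : Ω) : ℝ :=
  Q x - α - ∑ i, ψ i x * β i

/-- The discrete measure with mass `p j` at the scenario `ξ j`, a candidate solution of the pricing
master problem. Negative weights are truncated to `0`. -/
noncomputable def discreteMeasure [MeasurableSpace Ω] [Fintype κ] (p : κ → ℝ) (ξ : κ → Ω) :
    Measure Ω :=
  ∑ j, ENNReal.ofReal (p j) • Measure.dirac (ξ j)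

end Definitions

section DiscreteMeasure

variable {Ω κ : Type*} [MeasurableSpace Ω] [Fintype κ] {p : κ → ℝ}

theorem isProbabilityMeasure_discreteMeasure (hp : ∀ j, 0 ≤ p j) (hps : ∑ j, p j = 1)
    (ξ : κ → Ω) : IsProbabilityMeasure (discreteMeasure p ξ) where
  measure_univ := by
    simp [discreteMeasure, ← ENNReal.ofReal_sum_of_nonneg fun j _ => hp j, hps]

variable [MeasurableSingletonClass Ω]

theorem discreteMeasure_apply_eq_zero (p : κ → ℝ) {ξ : κ → Ω} {s : Set Ω} (hξ : ∀ j, ξ j ∉ s) :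
    discreteMeasure p ξ s = 0 := by
  simp [discreteMeasure, hξ]

theorem integral_discreteMeasure {E : Type*} [NormedAddCommGroup E] [NormedSpace ℝ E]
    [CompleteSpace E] (hp : ∀ j, 0 ≤ p j) (ξ : κ → Ω) (f : Ω → E) :
    ∫ x, f x ∂discreteMeasure p ξ = ∑ j, p j • f (ξ j) := by
  have hf : ∀ j ∈ Finset.univ, Integrable f (ENNReal.ofReal (p j) • Measure.dirac (ξ j)) :=
    fun j _ => (integrable_dirac (by simp)).smul_measure ENNReal.ofReal_ne_top
  simp only [discreteMeasure, integral_finsetSum_measure hf, integral_smul_measure,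
    integral_dirac, ENNReal.toReal_ofReal (hp _)]

theorem discreteMeasure_mem_momentAmbiguitySet {ι : Type*} {Ξ : Set Ω} {ψ : ι → Ω → ℝ}
    {γ : ι → ℝ} {ξ : κ → Ω} (hξ : ∀ j, ξ j ∈ Ξ) (hp : ∀ j, 0 ≤ p j) (hps : ∑ j, p j = 1)
    (hfeas : ∀ i, ∑ j, p j * ψ i (ξ j) ≤ γ i) :
    discreteMeasure p ξ ∈ momentAmbiguitySet Ξ ψ γ := by
  refine ⟨isProbabilityMeasure_discreteMeasure hp hps ξ,
    discreteMeasure_apply_eq_zero p fun j => not_not_intro (hξ j), fun i => ?_⟩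
  simpa only [integral_discreteMeasure hp, smul_eq_mul] using hfeas i

end DiscreteMeasure

theorem integrable_of_bounded_on {Ω E : Type*} [MeasurableSpace Ω] [NormedAddCommGroup E]
    {P : Measure Ω} [IsFiniteMeasure P] {Ξ : Set Ω} (hP : P Ξᶜ = 0) {f : Ω → E}
    (hf : AEStronglyMeasurable f P) (hb : ∃ C, ∀ x ∈ Ξ, ‖f x‖ ≤ C) : Integrable f P := by
  obtain ⟨C, hC⟩ := hb
  have hΞ : ∀ᵐ x ∂P, x ∈ Ξ := hP
  exact .of_bound hf C (hΞ.mono hC)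

section WeakDuality

variable {Ω ι : Type*} [Fintype ι] {Q : Ω → ℝ} {ψ : ι → Ω → ℝ} {α : ℝ} {β γ : ι → ℝ}

theorem bddAbove_reducedCost {Ξ : Set Ω} (hQ : BddAbove (Q '' Ξ))
    (hψ : ∀ i, BddBelow (ψ i '' Ξ)) (hβ : ∀ i, 0 ≤ β i) :
    BddAbove (reducedCost Q ψ α β '' Ξ) := by
  obtain ⟨C, hC⟩ := hQ
  choose D hD using hψ
  refine ⟨C - α - ∑ i, D i * β i, Set.forall_mem_image.2 fun x hx => ?_⟩
  unfold reducedCost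
  gcongr with i
  · exact hC (Set.mem_image_of_mem Q hx)
  · exact hβ i
  · exact hD i (Set.mem_image_of_mem (ψ i) hx)

variable [MeasurableSpace Ω] {P : Measure Ω}

theorem integrable_reducedCost [IsFiniteMeasure P] (hQ : Integrable Q P)
    (hψ : ∀ i, Integrable (ψ i) P) : Integrable (reducedCost Q ψ α β) P :=
  (hQ.sub (integrable_const α)).sub (integrable_finsetSum _ fun i _ => (hψ i).mul_const (β i))

theorem integral_reducedCost [IsProbabilityMeasure P] (hQ : Integrable Q P)
    (hψ : ∀ i, Integrable (ψ i) P) :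
    ∫ x, reducedCost Q ψ α β x ∂P = (∫ x, Q x ∂P) - α - ∑ i, (∫ x, ψ i x ∂P) * β i := by
  have hψβ : ∀ i ∈ Finset.univ, Integrable (fun x => ψ i x * β i) P :=
    fun i _ => (hψ i).mul_const (β i)
  unfold reducedCost
  rw [integral_sub (f := fun x => Q x - α) (hQ.sub (integrable_const α))
      (integrable_finsetSum _ hψβ),
    integral_sub hQ (integrable_const α), integral_finsetSum _ hψβ]
  simp only [integral_const, probReal_univ, one_smul, integral_mul_const]

theorem integral_le_of_reducedCost_le [IsProbabilityMeasure P] {v : ℝ} (hQ : Integrable Q P)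
    (hψ : ∀ i, Integrable (ψ i) P) (hγ : ∀ i, ∫ x, ψ i x ∂P ≤ γ i) (hβ : ∀ i, 0 ≤ β i)
    (hv : ∀ᵐ x ∂P, reducedCost Q ψ α β x ≤ v) :
    ∫ x, Q x ∂P ≤ α + ∑ i, γ i * β i + v := by
  have hcost : ∫ x, reducedCost Q ψ α β x ∂P ≤ v := by
    simpa using integral_mono_ae (integrable_reducedCost hQ hψ) (integrable_const v) hv
  calc ∫ x, Q x ∂P
      = α + ∑ i, (∫ x, ψ i x ∂P) * β i + ∫ x, reducedCost Q ψ α β x ∂P := by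
        rw [integral_reducedCost hQ hψ]; ring
    _ ≤ α + ∑ i, γ i * β i + v := by
        gcongr with i
        · exact hβ i
        · exact hγ i

theorem integral_le_of_mem_momentAmbiguitySet {Ξ : Set Ω} (hQm : Measurable Q)
    (hQb : ∃ C, ∀ x ∈ Ξ, |Q x| ≤ C) (hψm : ∀ i, Measurable (ψ i))
    (hψb : ∀ i, ∃ C, ∀ x ∈ Ξ, |ψ i x| ≤ C) (hβ : ∀ i, 0 ≤ β i)
    (hP : P ∈ momentAmbiguitySet Ξ ψ γ) :
    ∫ x, Q x ∂P ≤ α + ∑ i, γ i * β i + sSup (reducedCost Q ψ α β '' Ξ) := by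
  obtain ⟨_, hPΞ, hPγ⟩ := hP
  have hΞ : ∀ᵐ x ∂P, x ∈ Ξ := hPΞ
  have hQ_above : BddAbove (Q '' Ξ) :=
    hQb.imp fun _ hC => Set.forall_mem_image.2 fun x hx => (abs_le.1 (hC x hx)).2
  have hψ_below : ∀ i, BddBelow (ψ i '' Ξ) := fun i =>
    let ⟨C, hC⟩ := hψb i
    ⟨-C, Set.forall_mem_image.2 fun x hx => (abs_le.1 (hC x hx)).1⟩
  have hcost : ∀ᵐ x ∂P, reducedCost Q ψ α β x ≤ sSup (reducedCost Q ψ α β '' Ξ) :=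
    hΞ.mono fun x hx =>
      le_csSup (bddAbove_reducedCost hQ_above hψ_below hβ) (Set.mem_image_of_mem _ hx)
  exact integral_le_of_reducedCost_le
    (integrable_of_bounded_on hPΞ hQm.aestronglyMeasurable hQb)
    (fun i => integrable_of_bounded_on hPΞ (hψm i).aestronglyMeasurable (hψb i)) hPγ hβ hcost

end WeakDuality

theorem pricing_bounds_on_WCEV_general {Ω ι κ : Type*} [MeasurableSpace Ω]
    [MeasurableSingletonClass Ω] [Fintype ι] [Fintype κ] {Ξ : Set Ω}
    {Q : Ω → ℝ} (hQm : Measurable Q) (hQb : ∃ C, ∀ x ∈ Ξ, |Q x| ≤ C)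
    {ψ : ι → Ω → ℝ} (hψm : ∀ i, Measurable (ψ i)) (hψb : ∀ i, ∃ C, ∀ x ∈ Ξ, |ψ i x| ≤ C)
    {γ : ι → ℝ} {ξ : κ → Ω} (hξ : ∀ j, ξ j ∈ Ξ)
    {p : κ → ℝ} (hp : ∀ j, 0 ≤ p j) (hps : ∑ j, p j = 1)
    (hfeas : ∀ i, ∑ j, p j * ψ i (ξ j) ≤ γ i) (α : ℝ) {β : ι → ℝ} (hβ : ∀ i, 0 ≤ β i) :
    ∑ j, p j * Q (ξ j) ≤ worstCaseExpectation (momentAmbiguitySet Ξ ψ γ) Q ∧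
      worstCaseExpectation (momentAmbiguitySet Ξ ψ γ) Q ≤
        α + ∑ i, γ i * β i + sSup (reducedCost Q ψ α β '' Ξ) := by
  have hmem := discreteMeasure_mem_momentAmbiguitySet hξ hp hps hfeas
  have hupper : ∀ P ∈ momentAmbiguitySet Ξ ψ γ,
      ∫ x, Q x ∂P ≤ α + ∑ i, γ i * β i + sSup (reducedCost Q ψ α β '' Ξ) :=
    fun _ => integral_le_of_mem_momentAmbiguitySet hQm hQb hψm hψb hβ
  constructor
  · calc ∑ j, p j * Q (ξ j) = ∫ x, Q x ∂discreteMeasure p ξ :=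
          (integral_discreteMeasure hp ξ Q).symm
      _ ≤ worstCaseExpectation (momentAmbiguitySet Ξ ψ γ) Q :=
          le_csSup ⟨_, Set.forall_mem_image.2 hupper⟩ (Set.mem_image_of_mem _ hmem)
  · exact csSup_le ⟨_, Set.mem_image_of_mem _ hmem⟩ (Set.forall_mem_image.2 hupper)

/-- (Bounds from the column-generation master/subproblem pair.)
If `η* = ∑_j p*_j Q(ξ_j)` is the value of a feasible discrete distribution, `(α*, β*)`
satisfies `α* + ∑_i γ_i β*_i = η*` with `β* ≥ 0`, and `v*` is the optimal value of the
pricing subproblem, then `η* ≤ sup_{P ∈ 𝒫} ∫ Q dP ≤ η* + v*`. -/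
theorem pricing_bounds_on_WCEV
    (d m n : ℕ) (Ξ : Set (EuclideanSpace ℝ (Fin d)))
    (hΞne : Ξ.Nonempty) (hΞc : IsCompact Ξ)
    (Q : EuclideanSpace ℝ (Fin d) → ℝ)
    (hQm : Measurable Q) (hQb : ∃ C, ∀ x ∈ Ξ, |Q x| ≤ C)
    (ψ : Fin m → EuclideanSpace ℝ (Fin d) → ℝ)
    (hψm : ∀ i, Measurable (ψ i)) (hψb : ∀ i, ∃ C, ∀ x ∈ Ξ, |ψ i x| ≤ C)
    (γ : Fin m → ℝ)
    (ξ : Fin n → EuclideanSpace ℝ (Fin d)) (hξ : ∀ j, ξ j ∈ Ξ)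
    (p : Fin n → ℝ) (hp : ∀ j, 0 ≤ p j) (hps : ∑ j, p j = 1)
    (hfeas : ∀ i, ∑ j, p j * ψ i (ξ j) ≤ γ i)
    (η : ℝ) (hη : η = ∑ j, p j * Q (ξ j))
    (α : ℝ) (β : Fin m → ℝ) (hβ : ∀ i, 0 ≤ β i)
    (hdual : α + ∑ i, γ i * β i = η)
    (v : ℝ) (hv : v = sSup {t : ℝ | ∃ x ∈ Ξ, Q x - α - ∑ i, ψ i x * β i = t}) :
    η ≤ sSup {r : ℝ | ∃ P : Measure (EuclideanSpace ℝ (Fin d)),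
        (IsProbabilityMeasure P ∧ P Ξᶜ = 0 ∧ ∀ i, ∫ x, ψ i x ∂P ≤ γ i) ∧
        (∫ x, Q x ∂P) = r} ∧
      sSup {r : ℝ | ∃ P : Measure (EuclideanSpace ℝ (Fin d)),
        (IsProbabilityMeasure P ∧ P Ξᶜ = 0 ∧ ∀ i, ∫ x, ψ i x ∂P ≤ γ i) ∧
        (∫ x, Q x ∂P) = r} ≤ η + v := by
  subst hv
  have hbounds := pricing_bounds_on_WCEV_general hQm hQb hψm hψb hξ hp hps hfeas α hβ
  rwa [hdual, ← hη] at hbounds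
end

section
/- Let Ξ ⊆ ℝ^d be contained in a closed ball of radius R ≥ 0, and let ε, δ > 0. Suppose ξ¹, …, ξ^K ∈ Ξ and r_1, …, r_{K−1} : Ξ → ℝ satisfy, for every k ∈ {1,…,K−1}: (a) |r_k(ξ) − r_k(ξ')| ≤ ε whenever ξ, ξ' ∈ Ξ and ‖ξ − ξ'‖ ≤ δ; (b) r_k(ξ^j) ≤ 0 for every j ∈ {1,…,k}; and (c) r_k(ξ^{k+1}) > ε. Then the points ξ¹, …, ξ^K are pairwise at Euclidean distance greater than δ, and consequently K · vol(B(0, δ/2)) ≤ vol(B(0, R + δ/2)), where vol(B(0, r)) is the Lebesgue measure of the Euclidean ball of radius r in ℝ^d; in particular only finitely many such iterates can be generated. -/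
open MeasureTheory ENNReal

/-!
If two scenarios were at distance at most `δ`, the reduced-cost function that generated the later
one would differ by at most `ε` between them, yet it is nonpositive at the earlier one and exceeds
`ε` at the later one. Hence the scenarios are `δ`-separated, the balls of radius `δ / 2` around them
are disjoint and lie in the ball of radius `R + δ / 2`, and comparing volumes bounds their number.
-/

section Separation

variable {X Y : Type*} [PseudoMetricSpace X] [PseudoMetricSpace Y] {s : Set X} {ε δ : ℝ}

/-- Uniform continuity of `f` on `s` at the single scale `(ε, δ)`, the regularity required of each
reduced-cost function. Both inequalities are non-strict. -/
def HasModulusOn (f : X → Y) (s : Set X) (ε δ : ℝ) : Prop :=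
  ∀ x ∈ s, ∀ y ∈ s, dist x y ≤ δ → dist (f x) (f y) ≤ ε

theorem HasModulusOn.lt_dist {f : X → Y} (hf : HasModulusOn f s ε δ) {x y : X} (hx : x ∈ s)
    (hy : y ∈ s) (hxy : ε < dist (f x) (f y)) : δ < dist x y :=
  lt_of_not_ge fun hle ↦ (hf x hx y hy hle).not_gt hxy

theorem HasModulusOn.lt_dist_of_add_lt {f : X → ℝ} (hf : HasModulusOn f s ε δ) {x y : X}
    (hx : x ∈ s) (hy : y ∈ s) (hxy : f x + ε < f y) : δ < dist x y := by
  refine hf.lt_dist hx hy ?_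
  calc
    ε < f y - f x := lt_sub_iff_add_lt'.mpr hxy
    _ ≤ |f y - f x| := le_abs_self _
    _ = dist (f x) (f y) := by rw [dist_comm, Real.dist_eq]

theorem pairwise_lt_dist_of_hasModulusOn {K : ℕ} {ξ : Fin K → X} (hξ : ∀ j, ξ j ∈ s)
    {r : ℕ → X → ℝ} (hmod : ∀ k, k + 1 < K → HasModulusOn (r k) s ε δ)
    (hprev : ∀ k, k + 1 < K → ∀ j : Fin K, (j : ℕ) ≤ k → r k (ξ j) ≤ 0)
    (hnew : ∀ (k : ℕ) (hk : k + 1 < K), ε < r k (ξ ⟨k + 1, hk⟩)) :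
    Pairwise fun i j ↦ δ < dist (ξ i) (ξ j) := by
  have hsymm : Std.Symm fun i j ↦ δ < dist (ξ i) (ξ j) :=
    ⟨fun i j hij ↦ hij.trans_eq (dist_comm _ _)⟩
  refine Pairwise.of_lt ?_
  rintro i ⟨_ | k, hk⟩ hij
  · exact absurd hij (Nat.not_lt_zero i)
  · have hi : r k (ξ i) ≤ 0 := hprev k hk i (Nat.le_of_lt_succ hij)
    have hj : ε < r k (ξ ⟨k + 1, hk⟩) := hnew k hk
    exact (hmod k hk).lt_dist_of_add_lt (hξ i) (hξ _) (by linarith)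

end Separation

section Packing

variable {X E ι : Type*} {R δ : ℝ}

theorem tsum_measure_ball_le_of_pairwise_le_dist [PseudoMetricSpace X] [MeasurableSpace X]
    [OpensMeasurableSpace X] (μ : Measure X) {x : ι → X} {x₀ : X}
    (hx : ∀ i, x i ∈ Metric.closedBall x₀ R) (hsep : Pairwise fun i j ↦ δ ≤ dist (x i) (x j)) :
    ∑' i, μ (Metric.ball (x i) (δ / 2)) ≤ μ (Metric.ball x₀ (R + δ / 2)) := by
  have hdisj : Pairwise (Function.onFun Disjoint fun i ↦ Metric.ball (x i) (δ / 2)) :=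
    fun i j hij ↦ Metric.ball_disjoint_ball ((add_halves δ).trans_le (hsep hij))
  have hsub : ⋃ i, Metric.ball (x i) (δ / 2) ⊆ Metric.ball x₀ (R + δ / 2) :=
    Set.iUnion_subset fun i ↦ Metric.ball_subset_ball' <| by
      linarith [Metric.mem_closedBall.mp (hx i)]
  calc
    ∑' i, μ (Metric.ball (x i) (δ / 2)) ≤ μ (⋃ i, Metric.ball (x i) (δ / 2)) :=
      tsum_meas_le_meas_iUnion_of_disjoint μ (fun _ ↦ measurableSet_ball) hdisj
    _ ≤ μ (Metric.ball x₀ (R + δ / 2)) := measure_mono hsub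

theorem card_mul_addHaar_ball_le_of_pairwise_le_dist [NormedAddCommGroup E] [MeasurableSpace E]
    [BorelSpace E] (μ : Measure E) [μ.IsAddHaarMeasure] {x : ι → E} {x₀ : E}
    (hx : ∀ i, x i ∈ Metric.closedBall x₀ R) (hsep : Pairwise fun i j ↦ δ ≤ dist (x i) (x j)) :
    ENat.card ι * μ (Metric.ball 0 (δ / 2)) ≤ μ (Metric.ball 0 (R + δ / 2)) := by
  simpa only [Measure.addHaar_ball_center, ENNReal.tsum_const] using
    tsum_measure_ball_le_of_pairwise_le_dist μ hx hsep

end Packing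

theorem column_generation_finite_termination_general {E : Type*} [NormedAddCommGroup E]
    [MeasurableSpace E] [BorelSpace E] (μ : Measure E) [μ.IsAddHaarMeasure] {Ξ : Set E} {x₀ : E}
    {R ε δ : ℝ} (hΞ : Ξ ⊆ Metric.closedBall x₀ R) {K : ℕ} {ξ : Fin K → E} (hξ : ∀ j, ξ j ∈ Ξ)
    {r : ℕ → E → ℝ} (hmod : ∀ k, k + 1 < K → HasModulusOn (r k) Ξ ε δ)
    (hprev : ∀ k, k + 1 < K → ∀ j : Fin K, (j : ℕ) ≤ k → r k (ξ j) ≤ 0)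
    (hnew : ∀ (k : ℕ) (hk : k + 1 < K), ε < r k (ξ ⟨k + 1, hk⟩)) :
    (Pairwise fun i j ↦ δ < dist (ξ i) (ξ j)) ∧
      (K : ℝ≥0∞) * μ (Metric.ball 0 (δ / 2)) ≤ μ (Metric.ball 0 (R + δ / 2)) := by
  have hsep := pairwise_lt_dist_of_hasModulusOn hξ hmod hprev hnew
  have hpack := card_mul_addHaar_ball_le_of_pairwise_le_dist μ (fun j ↦ hΞ (hξ j))
    fun i j hij ↦ (hsep hij).le
  exact ⟨hsep, by simpa using hpack⟩

/-- (Finite termination of the column-generation oracle.) If the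
reduced-cost functions `r k` (for `k + 1 < K`) are uniformly continuous with modulus
`(ε, δ)` on `Ξ`, nonpositive at all previously generated scenarios `ξ 0, …, ξ k`, and
exceed `ε` at the newly generated scenario `ξ (k+1)`, then the scenarios are pairwise
more than `δ` apart; consequently `K · vol(B(0, δ/2)) ≤ vol(B(0, R + δ/2))`, so only
finitely many iterates can be generated. -/
theorem column_generation_finite_termination
    (d : ℕ) (Ξ : Set (EuclideanSpace ℝ (Fin d)))
    (x₀ : EuclideanSpace ℝ (Fin d)) (R : ℝ) (hR : 0 ≤ R)
    (hΞ : Ξ ⊆ Metric.closedBall x₀ R)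
    (ε δ : ℝ) (hε : 0 < ε) (hδ : 0 < δ)
    (K : ℕ) (ξ : Fin K → EuclideanSpace ℝ (Fin d)) (hξ : ∀ j, ξ j ∈ Ξ)
    (r : ℕ → EuclideanSpace ℝ (Fin d) → ℝ)
    (ha : ∀ k, k + 1 < K → ∀ x ∈ Ξ, ∀ y ∈ Ξ, ‖x - y‖ ≤ δ → |r k x - r k y| ≤ ε)
    (hb : ∀ k, k + 1 < K → ∀ j : Fin K, (j : ℕ) ≤ k → r k (ξ j) ≤ 0)
    (hc : ∀ (k : ℕ) (hk : k + 1 < K), ε < r k (ξ ⟨k + 1, hk⟩)) :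
    (∀ i j : Fin K, i ≠ j → δ < ‖ξ i - ξ j‖) ∧
      (K : ℝ≥0∞) *
          volume (Metric.ball (0 : EuclideanSpace ℝ (Fin d)) (δ / 2)) ≤
        volume (Metric.ball (0 : EuclideanSpace ℝ (Fin d)) (R + δ / 2)) := by
  simp only [← dist_eq_norm, ← Real.dist_eq] at ha ⊢
  exact column_generation_finite_termination_general volume hΞ hξ ha hb hc
end

section
/- Let Ξ be a nonempty compact subset of ℝ^d, let Q̃ : Ξ → ℝ be bounded and upper semicontinuous, let ξ^e_1, …, ξ^e_N ∈ Ξ, let p^e_1, …, p^e_N > 0 with ∑_{i=1}^N p^e_i = 1, and let r ≥ 0. Then the value sup { ∑_{i=1}^N p^e_i ∫_Ξ Q̃ dP_i : P_1, …, P_N Borel probability measures on Ξ with ∑_{i=1}^N p^e_i ∫_Ξ ‖ξ − ξ^e_i‖ dP_i(ξ) ≤ r } is attained, and it equals the maximum of ∑_{i=1}^N p^e_i ( Q̃(ξ_{i1}) p_{i1} + Q̃(ξ_{i2}) p_{i2} ) over all ξ_{i1}, ξ_{i2} ∈ Ξ and p_{i1}, p_{i2} ≥ 0 (i = 1,…,N)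 satisfying p_{i1} + p_{i2} = 1 for every i and ∑_{i=1}^N p^e_i ( ‖ξ_{i1} − ξ^e_i‖ p_{i1} + ‖ξ_{i2} − ξ^e_i‖ p_{i2} ) ≤ r; i.e. the Wasserstein worst-case expected value is attained by a distribution whose conditional distribution given each empirical sample ξ^e_i is supported on at most two points. -/
open MeasureTheory

/-!
Given a sample, only the moment pair (expected cost, expected reward) of a conditional
distribution matters. With `m` a lower bound of `Q`, it lies in the convex hull of the compact
planar set of pairs `(c x, q)` with `m ≤ q ≤ Q x`. Maximizing over the product of these compact
hulls, subject to the linear budget constraint, gives an optimal choice of moment pairs. Raising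
the reward of an optimal pair until it reaches the boundary of the hull, where Carathéodory's
theorem saves one point, exhibits the pair as dominated by a mixture of two points, not three.
-/

open Module Set Topology

section Convexity

variable {E : Type*} [AddCommGroup E] [Module ℝ E]

lemma linearCombination_image_stdSimplex {ι : Type*} [Fintype ι] (z : ι → E) :
    Fintype.linearCombination ℝ z '' stdSimplex ℝ ι = convexHull ℝ (range z) := by
  classical
  rw [← convexHull_rangle_single_eq_stdSimplex, LinearMap.image_convexHull, ← range_comp]
  congr 2
  ext i
  simp [Fintype.linearCombination_apply_single]

lemma exists_stdSimplex_sum_of_mem_convexHull_finset {t : Finset E} {n : ℕ} (ht : t.card ≤ n)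
    {x : E} (hx : x ∈ convexHull ℝ (t : Set E)) :
    ∃ w ∈ stdSimplex ℝ (Fin n), ∃ z : Fin n → E, (∀ i, z i ∈ t) ∧ ∑ i, w i • z i = x := by
  have : Nonempty t := (convexHull_nonempty_iff.1 ⟨x, hx⟩).to_subtype
  obtain ⟨f⟩ : Nonempty (t ↪ Fin n) := Function.Embedding.nonempty_of_card_le (by simpa using ht)
  let g : Fin n → t := Function.invFun f
  have hg : Function.Surjective g := Function.invFun_surjective f.injective
  have hrange : range (fun i => (g i : E)) = t :=
    (hg.range_comp Subtype.val).trans Subtype.range_coe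
  rw [← hrange, ← linearCombination_image_stdSimplex] at hx
  obtain ⟨w, hw, rfl⟩ := hx
  exact ⟨w, hw, fun i => g i, fun i => (g i).2, rfl⟩

lemma card_le_finrank_add_one_of_affineIndependent [FiniteDimensional ℝ E] {ι : Type*} [Fintype ι]
    {z : ι → E} (hz : AffineIndependent ℝ z) : Fintype.card ι ≤ finrank ℝ E + 1 :=
  hz.card_le_finrank_succ.trans (Nat.succ_le_succ (Submodule.finrank_le _))

lemma exists_finset_card_le_finrank_succ_of_mem_convexHull [FiniteDimensional ℝ E] {s : Set E}
    {x : E} (hx : x ∈ convexHull ℝ s) :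
    ∃ t : Finset E, ↑t ⊆ s ∧ t.card ≤ finrank ℝ E + 1 ∧ x ∈ convexHull ℝ (t : Set E) := by
  rw [convexHull_eq_union] at hx
  simp only [mem_iUnion, exists_prop] at hx
  obtain ⟨t, hts, ht, hxt⟩ := hx
  exact ⟨t, hts, by simpa using card_le_finrank_add_one_of_affineIndependent ht, hxt⟩

lemma isCompact_convexHull [TopologicalSpace E] [ContinuousAdd E] [ContinuousSMul ℝ E]
    [FiniteDimensional ℝ E] {s : Set E} (hs : IsCompact s) : IsCompact (convexHull ℝ s) := by
  let n := finrank ℝ E + 1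
  have himage : convexHull ℝ s = (fun p : (Fin n → ℝ) × (Fin n → E) => ∑ i, p.1 i • p.2 i) ''
      (stdSimplex ℝ (Fin n) ×ˢ univ.pi fun _ => s) := by
    refine Subset.antisymm (fun x hx => ?_) ?_
    · obtain ⟨t, hts, htn, hxt⟩ := exists_finset_card_le_finrank_succ_of_mem_convexHull hx
      obtain ⟨w, hw, z, hz, rfl⟩ := exists_stdSimplex_sum_of_mem_convexHull_finset htn hxt
      exact ⟨(w, z), ⟨hw, fun i _ => hts (hz i)⟩, rfl⟩
    · rintro _ ⟨⟨w, z⟩, ⟨hw, hz⟩, rfl⟩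
      exact (convex_convexHull ℝ s).sum_mem (fun i _ => hw.1 i) hw.2
        fun i _ => subset_convexHull ℝ s (hz i (mem_univ i))
  rw [himage]
  exact ((isCompact_stdSimplex ℝ _).prod (isCompact_univ_pi fun _ => hs)).image (by fun_prop)

end Convexity

section CaratheodoryBoundary

variable {E V : Type*} [NormedAddCommGroup E] [NormedSpace ℝ E]
  [NormedAddCommGroup V] [NormedSpace ℝ V]

lemma sum_smul_mem_interior_convexHull_range [FiniteDimensional ℝ E] {ι : Type*} [Fintype ι]
    {z : ι → E} (hz : AffineIndependent ℝ z) (hcard : Fintype.card ι = finrank ℝ E + 1)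
    {w : ι → ℝ} (hw : ∀ i, 0 < w i) (hw1 : ∑ i, w i = 1) :
    ∑ i, w i • z i ∈ interior (convexHull ℝ (range z)) := by
  let b : AffineBasis ι ℝ E :=
    ⟨z, hz, hz.affineSpan_eq_top_iff_card_eq_finrank_add_one.2 hcard⟩
  change _ ∈ interior (convexHull ℝ (range b))
  rw [b.interior_convexHull,
    ← Finset.affineCombination_eq_linear_combination Finset.univ z w hw1]
  intro i
  rw [show z = b from rfl, b.coord_apply_combination_of_mem (Finset.mem_univ i) hw1]
  exact hw i

lemma exists_finset_card_le_finrank_of_notMem_interior [FiniteDimensional ℝ E] {s : Set E} {x : E}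
    (hx : x ∈ convexHull ℝ s) (hxi : x ∉ interior (convexHull ℝ s)) :
    ∃ t : Finset E, ↑t ⊆ s ∧ t.card ≤ finrank ℝ E ∧ x ∈ convexHull ℝ (t : Set E) := by
  classical
  obtain ⟨ι, _, z, w, hzs, hz, hw, hw1, rfl⟩ := eq_pos_convex_span_of_mem_convexHull hx
  have hcard : Fintype.card ι ≤ finrank ℝ E := by
    refine Nat.le_of_lt_succ (lt_of_le_of_ne ?_ fun h => hxi ?_)
    · exact card_le_finrank_add_one_of_affineIndependent hz
    · exact interior_mono (convexHull_mono hzs)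
        (sum_smul_mem_interior_convexHull_range hz h hw hw1)
  refine ⟨Finset.univ.image z, by simpa using hzs, Finset.card_image_le.trans hcard, ?_⟩
  rw [Finset.coe_image, Finset.coe_univ, image_univ, ← linearCombination_image_stdSimplex]
  exact ⟨w, ⟨fun i => (hw i).le, hw1⟩, rfl⟩

lemma exists_le_mk_mem_notMem_interior {Y : Type*} [TopologicalSpace Y] [T1Space Y]
    {K : Set (Y × ℝ)} (hK : IsCompact K) {z : Y × ℝ} (hz : z ∈ K) :
    ∃ y, z.2 ≤ y ∧ (z.1, y) ∈ K ∧ (z.1, y) ∉ interior K := by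
  have hfiber : IsCompact (K ∩ Prod.fst ⁻¹' {z.1}) :=
    hK.inter_right (isClosed_singleton.preimage continuous_fst)
  obtain ⟨⟨_, y⟩, ⟨hy, rfl⟩, hmax⟩ :=
    hfiber.exists_isMaxOn ⟨z, hz, rfl⟩ continuous_snd.continuousOn
  refine ⟨y, hmax ⟨hz, rfl⟩, hy, fun hint => ?_⟩
  have hnear : ∀ᶠ a in 𝓝 y, (z.1, a) ∈ K :=
    (Continuous.prodMk_right z.1).continuousAt.eventually (mem_interior_iff_mem_nhds.1 hint)
  obtain ⟨a, ha, hya⟩ :=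
    ((hnear.filter_mono nhdsWithin_le_nhds).and (self_mem_nhdsWithin (s := Ioi y))).exists
  exact (hmax ⟨ha, rfl⟩ : a ≤ y).not_gt hya

lemma exists_finset_card_le_finrank_succ_dominating [FiniteDimensional ℝ V] {s : Set (V × ℝ)}
    {z : V × ℝ} (hz : z ∈ convexHull ℝ s) :
    ∃ t : Finset (V × ℝ), ↑t ⊆ s ∧ t.card ≤ finrank ℝ V + 1 ∧
      ∃ y, z.2 ≤ y ∧ (z.1, y) ∈ convexHull ℝ (t : Set (V × ℝ)) := by
  obtain ⟨u, hus, -, hzu⟩ := exists_finset_card_le_finrank_succ_of_mem_convexHull hz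
  obtain ⟨y, hzy, hy, hyi⟩ := exists_le_mk_mem_notMem_interior
    (u.finite_toSet.isCompact_convexHull ℝ) hzu
  obtain ⟨t, htu, ht, hyt⟩ := exists_finset_card_le_finrank_of_notMem_interior hy hyi
  exact ⟨t, htu.trans hus, by simpa using ht, y, hzy, hyt⟩

end CaratheodoryBoundary

section MomentPairs

variable {X : Type*} {S : Set X} {c Q : X → ℝ} {m : ℝ}

/-- The (cost, reward) pairs attainable at the points of `S` when the reward `Q` may be decreased
down to the floor `m`. This truncated hypograph is compact when `Q` is merely upper semicontinuous,
whereas the set of exact pairs `(c x, Q x)` need not be. -/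
def costRewardRegion (S : Set X) (c Q : X → ℝ) (m : ℝ) : Set (ℝ × ℝ) :=
  {z | ∃ x ∈ S, c x = z.1 ∧ m ≤ z.2 ∧ z.2 ≤ Q x}

lemma exists_two_point_dominating {z : ℝ × ℝ}
    (hz : z ∈ convexHull ℝ (costRewardRegion S c Q m)) :
    ∃ x₁ ∈ S, ∃ x₂ ∈ S, ∃ p₁ p₂ : ℝ, 0 ≤ p₁ ∧ 0 ≤ p₂ ∧ p₁ + p₂ = 1 ∧
      c x₁ * p₁ + c x₂ * p₂ = z.1 ∧ z.2 ≤ Q x₁ * p₁ + Q x₂ * p₂ := by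
  obtain ⟨t, hts, ht, y, hzy, hyt⟩ := exists_finset_card_le_finrank_succ_dominating hz
  rw [finrank_self] at ht
  obtain ⟨p, ⟨hp, hp1⟩, u, hu, hsum⟩ := exists_stdSimplex_sum_of_mem_convexHull_finset ht hyt
  choose x hxS hc _ hQ using fun i => hts (hu i)
  rw [Fin.sum_univ_two] at hp1 hsum
  obtain ⟨hcost, hreward⟩ := Prod.ext_iff.1 hsum
  simp only [Prod.fst_add, Prod.snd_add, Prod.smul_fst, Prod.smul_snd, smul_eq_mul]
    at hcost hreward
  refine ⟨x 0, hxS 0, x 1, hxS 1, p 0, p 1, hp 0, hp 1, hp1, ?_, hzy.trans ?_⟩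
  · rw [hc 0, hc 1, ← hcost]
    ring
  · rw [← hreward, mul_comm (Q _), mul_comm (Q _)]
    exact add_le_add (mul_le_mul_of_nonneg_left (hQ 0) (hp 0))
      (mul_le_mul_of_nonneg_left (hQ 1) (hp 1))

variable [TopologicalSpace X] [T2Space X]

lemma isCompact_costRewardRegion (hS : IsCompact S) (hc : ContinuousOn c S)
    (hQ : UpperSemicontinuousOn Q S) : IsCompact (costRewardRegion S c Q m) := by
  obtain ⟨M, hM⟩ := hQ.bddAbove_of_isCompact hS
  have hhypo : IsClosed {p : X × ℝ | p.1 ∈ S ∧ p.2 ≤ Q p.1} :=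
    (upperSemicontinuousOn_iff_isClosed_hypograph hS.isClosed).1 hQ
  have hcompact : IsCompact ((S ×ˢ Icc m M) ∩ {p | p.1 ∈ S ∧ p.2 ≤ Q p.1}) :=
    (hS.prod isCompact_Icc).inter_right hhypo
  have himage : costRewardRegion S c Q m = (fun p : X × ℝ => (c p.1, p.2)) ''
      ((S ×ˢ Icc m M) ∩ {p | p.1 ∈ S ∧ p.2 ≤ Q p.1}) := by
    ext ⟨a, q⟩
    constructor
    · rintro ⟨x, hx, rfl, hmq, hqQ⟩
      exact ⟨(x, q), ⟨⟨hx, hmq, hqQ.trans (hM (mem_image_of_mem Q hx))⟩, hx, hqQ⟩, rfl⟩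
    · rintro ⟨⟨x, _⟩, ⟨⟨hx, hmq, -⟩, -, hqQ⟩, ⟨⟩⟩
      exact ⟨x, hx, rfl, hmq, hqQ⟩
  rw [himage]
  refine hcompact.image_of_continuousOn (ContinuousOn.prodMk ?_ continuousOn_snd)
  exact hc.comp continuousOn_fst fun p hp => hp.1.1

variable [MeasurableSpace X] [OpensMeasurableSpace X] {P : Measure X}

lemma integrable_of_upperSemicontinuousOn [IsFiniteMeasure P] (hS : IsCompact S)
    (hP : P Sᶜ = 0) (hQ : UpperSemicontinuousOn Q S) (hQb : BddBelow (Q '' S)) :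
    Integrable Q P := by
  have hae : ∀ᵐ x ∂P, x ∈ S := hP
  have hmeas : AEMeasurable Q P := by
    rw [← Measure.restrict_eq_self_of_ae_mem hae]
    exact aemeasurable_restrict_of_measurable_subtype hS.measurableSet
      (upperSemicontinuousOn_iff_restrict.2 hQ).measurable
  obtain ⟨M, hM⟩ := hQ.bddAbove_of_isCompact hS
  obtain ⟨m, hm⟩ := hQb
  refine Integrable.of_mem_Icc m M hmeas ?_
  filter_upwards [hae] with x hx
  exact ⟨hm (mem_image_of_mem Q hx), hM (mem_image_of_mem Q hx)⟩

lemma moments_mem_convexHull_costRewardRegion [IsProbabilityMeasure P] (hS : IsCompact S)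
    (hP : P Sᶜ = 0) (hc : ContinuousOn c S) (hQ : UpperSemicontinuousOn Q S)
    (hm : ∀ x ∈ S, m ≤ Q x) :
    (∫ x, c x ∂P, ∫ x, Q x ∂P) ∈ convexHull ℝ (costRewardRegion S c Q m) := by
  have hci : Integrable c P := integrable_of_upperSemicontinuousOn hS hP
    hc.upperSemicontinuousOn (hS.bddBelow_image hc)
  have hQi : Integrable Q P := integrable_of_upperSemicontinuousOn hS hP hQ
    ⟨m, forall_mem_image.2 hm⟩
  rw [← integral_pair hci hQi]
  refine (convex_convexHull ℝ _).integral_mem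
    (isCompact_convexHull (isCompact_costRewardRegion hS hc hQ)).isClosed ?_ (hci.prodMk hQi)
  filter_upwards [show ∀ᵐ x ∂P, x ∈ S from hP] with x hx
  exact subset_convexHull ℝ _ ⟨x, hx, rfl, hm x hx, le_rfl⟩

end MomentPairs

section TwoPointMeasure

variable {X : Type*} [MeasurableSpace X] {x₁ x₂ : X} {p₁ p₂ : ℝ}

/-- The measure with mass `p₁` at `x₁` and mass `p₂` at `x₂`; negative masses are replaced
by `0`. -/
noncomputable def twoPointMeasure (x₁ x₂ : X) (p₁ p₂ : ℝ) : Measure X :=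
  ENNReal.ofReal p₁ • Measure.dirac x₁ + ENNReal.ofReal p₂ • Measure.dirac x₂

lemma isProbabilityMeasure_twoPointMeasure (hp₁ : 0 ≤ p₁) (hp₂ : 0 ≤ p₂) (hp : p₁ + p₂ = 1) :
    IsProbabilityMeasure (twoPointMeasure x₁ x₂ p₁ p₂) :=
  ⟨by simp [twoPointMeasure, ← ENNReal.ofReal_add hp₁ hp₂, hp]⟩

variable [MeasurableSingletonClass X]

lemma twoPointMeasure_compl {S : Set X} (hx₁ : x₁ ∈ S) (hx₂ : x₂ ∈ S) :
    twoPointMeasure x₁ x₂ p₁ p₂ Sᶜ = 0 := by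
  simp [twoPointMeasure, hx₁, hx₂]

lemma integral_twoPointMeasure (hp₁ : 0 ≤ p₁) (hp₂ : 0 ≤ p₂) (f : X → ℝ) :
    ∫ x, f x ∂twoPointMeasure x₁ x₂ p₁ p₂ = f x₁ * p₁ + f x₂ * p₂ := by
  have hf (x : X) (p : ℝ) : Integrable f (ENNReal.ofReal p • Measure.dirac x) :=
    (integrable_dirac (by simp)).smul_measure ENNReal.ofReal_ne_top
  rw [twoPointMeasure, integral_add_measure (hf _ _) (hf _ _)]
  simp only [integral_smul_measure, integral_dirac, ENNReal.toReal_ofReal hp₁,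
    ENNReal.toReal_ofReal hp₂, smul_eq_mul, mul_comm]

end TwoPointMeasure

section WorstCase

variable {X ι : Type*} [Fintype ι] {S : Set X} {Q : X → ℝ} {c : ι → X → ℝ} {w : ι → ℝ} {r : ℝ}

/-- The values `∑ i, w i * ∫ Q dP i` of the families of conditional distributions on `S` in the
ambiguity set: those whose average cost, with cost function `c i` for the `i`-th sample, is at
most `r`. -/
def ambiguityValues [MeasurableSpace X] (S : Set X) (Q : X → ℝ) (c : ι → X → ℝ) (w : ι → ℝ)
    (r : ℝ) : Set ℝ :=
  {v | ∃ P : ι → Measure X, (∀ i, IsProbabilityMeasure (P i)) ∧ (∀ i, P i Sᶜ = 0) ∧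
    (∑ i, w i * ∫ x, c i x ∂(P i)) ≤ r ∧ v = ∑ i, w i * ∫ x, Q x ∂(P i)}

/-- The values attained in the ambiguity set by conditional distributions with mass `p1 i` at
`ξ1 i` and `p2 i` at `ξ2 i`, written without measures. -/
def twoPointValues (S : Set X) (Q : X → ℝ) (c : ι → X → ℝ) (w : ι → ℝ) (r : ℝ) : Set ℝ :=
  {v | ∃ (ξ1 ξ2 : ι → X) (p1 p2 : ι → ℝ), (∀ i, ξ1 i ∈ S) ∧ (∀ i, ξ2 i ∈ S) ∧
    (∀ i, 0 ≤ p1 i) ∧ (∀ i, 0 ≤ p2 i) ∧ (∀ i, p1 i + p2 i = 1) ∧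
    (∑ i, w i * (c i (ξ1 i) * p1 i + c i (ξ2 i) * p2 i)) ≤ r ∧
    v = ∑ i, w i * (Q (ξ1 i) * p1 i + Q (ξ2 i) * p2 i)}

lemma twoPointValues_nonempty {x : ι → X} (hx : ∀ i, x i ∈ S) (hr : ∑ i, w i * c i (x i) ≤ r) :
    (twoPointValues S Q c w r).Nonempty :=
  ⟨_, x, x, fun _ => 1, fun _ => 0, hx, hx, by simp, by simp, by simp, by simpa using hr, rfl⟩

lemma twoPointValues_subset_ambiguityValues [MeasurableSpace X] [MeasurableSingletonClass X] :
    twoPointValues S Q c w r ⊆ ambiguityValues S Q c w r := by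
  rintro _ ⟨ξ1, ξ2, p1, p2, h1, h2, hp1, hp2, hp, hr, rfl⟩
  have hint (f : X → ℝ) (i : ι) := integral_twoPointMeasure (x₁ := ξ1 i) (x₂ := ξ2 i)
    (hp1 i) (hp2 i) f
  exact ⟨fun i => twoPointMeasure (ξ1 i) (ξ2 i) (p1 i) (p2 i),
    fun i => isProbabilityMeasure_twoPointMeasure (hp1 i) (hp2 i) (hp i),
    fun i => twoPointMeasure_compl (h1 i) (h2 i), by simpa only [hint] using hr,
    by simp only [hint]⟩

lemma exists_reward_maximal_of_isCompact {H : ι → Set (ℝ × ℝ)} (hH : ∀ i, IsCompact (H i))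
    (hfeas : ∃ z : ι → ℝ × ℝ, (∀ i, z i ∈ H i) ∧ ∑ i, w i * (z i).1 ≤ r) :
    ∃ z : ι → ℝ × ℝ, (∀ i, z i ∈ H i) ∧ ∑ i, w i * (z i).1 ≤ r ∧
      ∀ y : ι → ℝ × ℝ, (∀ i, y i ∈ H i) → ∑ i, w i * (y i).1 ≤ r →
        ∑ i, w i * (y i).2 ≤ ∑ i, w i * (z i).2 := by
  have hcompact : IsCompact (univ.pi H ∩ {z | ∑ i, w i * (z i).1 ≤ r}) :=
    (isCompact_univ_pi hH).inter_right (isClosed_le (by fun_prop) continuous_const)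
  obtain ⟨z₀, hz₀H, hz₀r⟩ := hfeas
  obtain ⟨z, ⟨hzH, hzr⟩, hmax⟩ := hcompact.exists_isMaxOn ⟨z₀, fun i _ => hz₀H i, hz₀r⟩
    (f := fun z => ∑ i, w i * (z i).2) (by fun_prop)
  exact ⟨z, fun i => hzH i (mem_univ i), hzr, fun y hyH hyr => hmax ⟨fun i _ => hyH i, hyr⟩⟩

variable [TopologicalSpace X] [T2Space X] [MeasurableSpace X] [OpensMeasurableSpace X]

lemma exists_mem_twoPointValues_mem_upperBounds (hS : IsCompact S)
    (hQ : UpperSemicontinuousOn Q S) (hQb : BddBelow (Q '' S)) (hc : ∀ i, ContinuousOn (c i) S)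
    (hw : ∀ i, 0 ≤ w i) (hfeas : (ambiguityValues S Q c w r).Nonempty) :
    ∃ v ∈ twoPointValues S Q c w r, v ∈ upperBounds (ambiguityValues S Q c w r) := by
  obtain ⟨m, hm⟩ := hQb
  have hmoments (P : Measure X) [IsProbabilityMeasure P] (hP : P Sᶜ = 0) (i : ι) :=
    moments_mem_convexHull_costRewardRegion hS hP (hc i) hQ fun x hx => hm (mem_image_of_mem Q hx)
  obtain ⟨_, P₀, _, hP₀S, hP₀r, -⟩ := hfeas
  obtain ⟨z, hz, hzr, hmax⟩ := exists_reward_maximal_of_isCompact (w := w) (r := r)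
    (fun i => isCompact_convexHull (isCompact_costRewardRegion (m := m) hS (hc i) hQ))
    ⟨_, fun i => hmoments (P₀ i) (hP₀S i) i, hP₀r⟩
  choose ξ1 h1 ξ2 h2 p1 p2 hp1 hp2 hp hcost hreward using
    fun i => exists_two_point_dominating (hz i)
  refine ⟨_, ⟨ξ1, ξ2, p1, p2, h1, h2, hp1, hp2, hp, by simpa only [hcost] using hzr, rfl⟩, ?_⟩
  rintro _ ⟨P, _, hPS, hPr, rfl⟩
  calc ∑ i, w i * ∫ x, Q x ∂(P i)
      ≤ ∑ i, w i * (z i).2 := hmax _ (fun i => hmoments (P i) (hPS i) i) hPr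
    _ ≤ ∑ i, w i * (Q (ξ1 i) * p1 i + Q (ξ2 i) * p2 i) :=
        Finset.sum_le_sum fun i _ => mul_le_mul_of_nonneg_left (hreward i) (hw i)

theorem wasserstein_WCEV_two_point_general (hS : IsCompact S) (hQ : UpperSemicontinuousOn Q S)
    (hQb : BddBelow (Q '' S)) (hc : ∀ i, ContinuousOn (c i) S) (hw : ∀ i, 0 ≤ w i)
    (hfeas : (ambiguityValues S Q c w r).Nonempty) :
    ∃ v, IsGreatest (ambiguityValues S Q c w r) v ∧ IsGreatest (twoPointValues S Q c w r) v := by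
  obtain ⟨v, hv, hub⟩ := exists_mem_twoPointValues_mem_upperBounds hS hQ hQb hc hw hfeas
  have hsub : twoPointValues S Q c w r ⊆ ambiguityValues S Q c w r :=
    twoPointValues_subset_ambiguityValues
  exact ⟨v, ⟨hsub hv, hub⟩, hv, upperBounds_mono_set hsub hub⟩

end WorstCase

/-- (Wasserstein worst case attained by two-point conditionals.) The
worst-case expected value over the Wasserstein ambiguity set around the empirical
distribution `∑ i, pe i • δ_{ξe i}` is attained, and equals the maximum of the values
attainable by distributions whose conditional given each empirical sample is supported
on at most two points. -/
theorem wasserstein_WCEV_two_point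
    (d N : ℕ) (Ξ : Set (EuclideanSpace ℝ (Fin d)))
    (hΞne : Ξ.Nonempty) (hΞc : IsCompact Ξ)
    (Q : EuclideanSpace ℝ (Fin d) → ℝ)
    (hQu : UpperSemicontinuousOn Q Ξ) (hQb : ∃ C, ∀ x ∈ Ξ, |Q x| ≤ C)
    (ξe : Fin N → EuclideanSpace ℝ (Fin d)) (hξe : ∀ i, ξe i ∈ Ξ)
    (pe : Fin N → ℝ) (hpe : ∀ i, 0 < pe i) (hpes : ∑ i, pe i = 1)
    (r : ℝ) (hr : 0 ≤ r) :
    ∃ v : ℝ,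
      IsGreatest {w : ℝ | ∃ P : Fin N → Measure (EuclideanSpace ℝ (Fin d)),
          (∀ i, IsProbabilityMeasure (P i)) ∧ (∀ i, P i Ξᶜ = 0) ∧
          (∑ i, pe i * ∫ x, ‖x - ξe i‖ ∂(P i)) ≤ r ∧
          w = ∑ i, pe i * ∫ x, Q x ∂(P i)} v ∧
      IsGreatest {w : ℝ | ∃ (ξ1 ξ2 : Fin N → EuclideanSpace ℝ (Fin d))
            (p1 p2 : Fin N → ℝ),
          (∀ i, ξ1 i ∈ Ξ) ∧ (∀ i, ξ2 i ∈ Ξ) ∧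
          (∀ i, 0 ≤ p1 i) ∧ (∀ i, 0 ≤ p2 i) ∧ (∀ i, p1 i + p2 i = 1) ∧
          (∑ i, pe i * (‖ξ1 i - ξe i‖ * p1 i + ‖ξ2 i - ξe i‖ * p2 i)) ≤ r ∧
          w = ∑ i, pe i * (Q (ξ1 i) * p1 i + Q (ξ2 i) * p2 i)} v := by
  obtain ⟨C, hC⟩ := hQb
  have hfeas := twoPointValues_nonempty (Q := Q) (c := fun i x => ‖x - ξe i‖) (w := pe) hξe
    (by simpa using hr)
  exact wasserstein_WCEV_two_point_general hΞc hQu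
    ⟨-C, forall_mem_image.2 fun x hx => (abs_le.1 (hC x hx)).1⟩ (fun i => by fun_prop)
    (fun i => (hpe i).le) (hfeas.mono twoPointValues_subset_ambiguityValues)
end
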